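/- arXiv:2505.22438 — 2 statements merged into one kernel-verified Lean document; each statement's English description precedes it below -/
import Mathlib

section
/- Let α be a finite type, let q and p be probability mass functions on α with p a > 0 for every a with q a > 0, and let π : α → β be a map into a finite type β (the synonymous mapping). Define the synset probability P : β → ℝ by P b = ∑_{a : π a = b} p a. Then the partial semantic KL divergence D_{KL,s}[q‖p_s] = ∑_{a} q a * log (q a / P (π a)) is at most the Kullback–Leibler divergence D_{KL}[q‖p] = ∑_{a} q a * log (q a / p a), where terms with q a = 0 are interpreted as 0. -/
open BigOperators

/-- The partial semantic KL divergence (against the synset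
probabilities induced by a synonymous mapping `π`) is at most the classical
Kullback–Leibler divergence. Terms with `q a = 0` contribute `0` since
`0 * log _ = 0` in `ℝ`. -/
theorem partial_semantic_KL_le_KL
    {α β : Type*} [Fintype α] [Fintype β] [DecidableEq β]
    (q p : α → ℝ)
    (hq : ∀ a, 0 ≤ q a) (hqsum : ∑ a, q a = 1)
    (hp : ∀ a, 0 ≤ p a) (hpsum : ∑ a, p a = 1)
    (hqp : ∀ a, 0 < q a → 0 < p a)
    (π : α → β)
    (P : β → ℝ)
    (hP : ∀ b, P b = ∑ a ∈ Finset.univ.filter (fun a => π a = b), p a) :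
    ∑ a, q a * Real.log (q a / P (π a)) ≤ ∑ a, q a * Real.log (q a / p a) := by
  apply Finset.sum_le_sum
  intro a _
  rcases (hq a).eq_or_lt with h | h
  · simp [← h]
  · have hpa := hqp a h
    have hle : p a ≤ P (π a) := by
      rw [hP]
      exact Finset.single_le_sum (f := p) (fun i _ => hp i) (by simp)
    have hPa : 0 < P (π a) := lt_of_lt_of_le hpa hle
    apply mul_le_mul_of_nonneg_left _ h.le
    apply Real.log_le_log (div_pos h hPa)
    exact div_le_div_of_nonneg_left h.le hpa hle
end

section
/- Let α be a finite type with probability mass function p, let ψ : α → β be a map into a finite type β (the deterministic encoder/decoder mapping X to the reconstruction X̂ = ψ(X)), and let f : α → γ and g : β → δ be maps into finite types (synonymous mappings). Let w be the joint pmf of (X, ψ(X)), i.e. w(a, b) = p a if b = ψ a and 0 otherwise, let p₂ be the pmf of ψ(X), and let Q be the pmf of g(ψ(X)) and P the pmf of f(X). Then H(Q) ≥ H(P) + H(Q) − H(w); equivalently, the joint entropy H(X, ψ(X)) = H(w) is at least the semantic entropy H_s(X̊) = H(P). (This is the paper's bound that the coding rate upper-bounds the down semantic mutual information, E[−log p(ŷ_s)]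 ≥ I_s(X̊; X̂̊).) -/
open BigOperators

/-- Shannon entropy of a pmf on a finite type (convention `0 * log 0 = 0`
holds automatically in `ℝ`). -/
noncomputable def shannonEntropy {α : Type*} [Fintype α] (p : α → ℝ) : ℝ :=
  -∑ a, p a * Real.log (p a)

/-- For a deterministic reconstruction `ψ(X)` and synonymous
mappings `f` (on the source) and `g` (on the reconstruction), with
`P` the pmf of `f(X)`, `Q` the pmf of `g(ψ(X))`, and `w` the joint pmf of
`(X, ψ(X))`, we have `H(Q) ≥ H(P) + H(Q) − H(w)`; i.e. the joint entropy
`H(w)` upper-bounds the semantic entropy `H(P)`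
(the coding rate upper-bounds the down semantic mutual information). -/
theorem coding_rate_ge_down_semantic_MI
    {α β γ δ : Type*} [Fintype α] [Fintype β] [Fintype γ] [Fintype δ]
    [DecidableEq β] [DecidableEq γ] [DecidableEq δ]
    (p : α → ℝ) (hp : ∀ a, 0 ≤ p a) (hpsum : ∑ a, p a = 1)
    (ψ : α → β) (f : α → γ) (g : β → δ)
    (w : α × β → ℝ) (hw : ∀ a b, w (a, b) = if b = ψ a then p a else 0)
    (p₂ : β → ℝ) (hp₂ : ∀ b, p₂ b = ∑ a, w (a, b))
    (Q : δ → ℝ)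
    (hQ : ∀ d, Q d = ∑ b ∈ Finset.univ.filter (fun b => g b = d), p₂ b)
    (P : γ → ℝ)
    (hP : ∀ c, P c = ∑ a ∈ Finset.univ.filter (fun a => f a = c), p a) :
    shannonEntropy P + shannonEntropy Q - shannonEntropy w
      ≤ shannonEntropy Q := by
  have h1 : ∑ x, w x * Real.log (w x) = ∑ a, p a * Real.log (p a) := by
    rw [Fintype.sum_prod_type]
    refine Finset.sum_congr rfl fun a _ => ?_
    rw [Finset.sum_eq_single (ψ a)]
    · simp [hw]
    · intro b _ hb
      simp [hw, hb]
    · simp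
  have h2 : ∑ c, P c * Real.log (P c) = ∑ a, p a * Real.log (P (f a)) := by
    rw [← Finset.sum_fiberwise Finset.univ f]
    refine Finset.sum_congr rfl fun c _ => ?_
    conv_lhs => rw [hP c, Finset.sum_mul, ← hP c]
    refine Finset.sum_congr rfl fun a ha => ?_
    rw [(Finset.mem_filter.mp ha).2]
  have h3 : ∑ a, p a * Real.log (p a) ≤ ∑ a, p a * Real.log (P (f a)) := by
    refine Finset.sum_le_sum fun a _ => ?_
    rcases (hp a).eq_or_lt with h | h
    · simp [← h]
    · refine mul_le_mul_of_nonneg_left (Real.log_le_log h ?_) (hp a)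
      rw [hP]
      exact Finset.single_le_sum (f := p) (fun i _ => hp i) (by simp)
  unfold shannonEntropy
  linarith
end
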